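/- Let n ≥ 2, let f ∈ ℂ[x,y] be a nonzero homogeneous polynomial of degree n, let (a₁,b₁) ∈ ℂ² be nonzero with (a₁·x + b₁·y) dividing f, and set g := conj(a₁)·∂f/∂x + conj(b₁)·∂f/∂y. Then g ≠ 0, and for every nonzero u = (u₁,u₂) ∈ ℂ² and every 1 ≤ c ≤ n−1: D_u^c g = 0 if and only if (u₂·x − u₁·y)^{n−c} divides g. -/

import Mathlib

open MvPolynomial

/-- Directional derivative. -/
noncomputable def dirD (s t : ℂ) (h : MvPolynomial (Fin 2) ℂ) : MvPolynomial (Fin 2) ℂ :=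
  C s * pderiv (0 : Fin 2) h + C t * pderiv (1 : Fin 2) h

theorem pderiv01_comm (h : MvPolynomial (Fin 2) ℂ) :
    pderiv (0 : Fin 2) (pderiv (1 : Fin 2) h) = pderiv (1 : Fin 2) (pderiv (0 : Fin 2) h) := by
  have hb : ⁅(pderiv (0 : Fin 2) : Derivation ℂ (MvPolynomial (Fin 2) ℂ) _),
      (pderiv (1 : Fin 2) : Derivation ℂ (MvPolynomial (Fin 2) ℂ) _)⁆ = 0 := by
    apply derivation_ext
    intro i
    rw [Derivation.commutator_apply]
    fin_cases i <;> simp [pderiv_X]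
  have h2 := congrArg (fun D => D h) hb
  simp only [Derivation.commutator_apply, Derivation.zero_apply] at h2
  exact sub_eq_zero.mp h2

theorem dirD_comm (s t p q : ℂ) (h : MvPolynomial (Fin 2) ℂ) :
    dirD s t (dirD p q h) = dirD p q (dirD s t h) := by
  unfold dirD
  simp only [map_add, pderiv_C_mul, pderiv01_comm, smul_eq_C_mul]
  ring

theorem dirD_zero (s t : ℂ) : dirD s t 0 = 0 := by simp [dirD]

theorem dirD_iter_comm (s t p q : ℂ) (c : ℕ) (h : MvPolynomial (Fin 2) ℂ) :
    (dirD s t)^[c] (dirD p q h) = dirD p q ((dirD s t)^[c] h) :=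
  (Function.Commute.iterate_left (f := dirD s t) (g := dirD p q) (dirD_comm s t p q) c) h

theorem dirD_hom (s t : ℂ) {h : MvPolynomial (Fin 2) ℂ} {d : ℕ} (hh : h.IsHomogeneous d) :
    (dirD s t h).IsHomogeneous (d - 1) :=
  (hh.pderiv.C_mul s).add (hh.pderiv.C_mul t)

theorem dirD_iter_hom (s t : ℂ) (c : ℕ) : ∀ {h : MvPolynomial (Fin 2) ℂ} {d : ℕ},
    h.IsHomogeneous d → ((dirD s t)^[c] h).IsHomogeneous (d - c) := by
  induction c with
  | zero => intro h d hh; simpa using hh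
  | succ c ih =>
    intro h d hh
    rw [Function.iterate_succ_apply]
    have := ih (dirD_hom s t hh)
    rwa [Nat.sub_sub, Nat.add_comm 1 c] at this

/-- The linear form killed by `dirD s t`. -/
noncomputable def linF (s t : ℂ) : MvPolynomial (Fin 2) ℂ :=
  C t * X (0 : Fin 2) - C s * X (1 : Fin 2)

theorem euler_split (s t p q : ℂ) (hpq : s * p + t * q = 1) {h : MvPolynomial (Fin 2) ℂ} {d : ℕ}
    (hh : h.IsHomogeneous d) :
    (d : ℂ) • h = (C p * X 0 + C q * X 1) * dirD s t h + linF s t * dirD q (-p) h := by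
  have he := hh.sum_X_mul_pderiv
  rw [Fin.sum_univ_two] at he
  have hC : (C s * C p + C t * C q : MvPolynomial (Fin 2) ℂ) = 1 := by
    rw [← C_mul, ← C_mul, ← C_add, hpq, C_1]
  have h3 : (d : ℂ) • h = d • h := Nat.cast_smul_eq_nsmul ℂ d h
  rw [h3, ← he]
  unfold dirD linF
  rw [C_neg]
  linear_combination (-(X 0 * pderiv 0 h) - X 1 * pderiv 1 h) * hC

theorem forward (s t p q : ℂ) (hpq : s * p + t * q = 1) (d : ℕ) :
    ∀ (c : ℕ) (h : MvPolynomial (Fin 2) ℂ), h.IsHomogeneous d → (dirD s t)^[c] h = 0 →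
      linF s t ^ (d + 1 - c) ∣ h := by
  induction d with
  | zero =>
    intro c h hh h0
    rcases c with _ | c
    · simp only [Function.iterate_zero, id] at h0
      rw [h0]; exact dvd_zero _
    · simp
  | succ d ih =>
    intro c h hh h0
    rcases c with _ | c
    · simp only [Function.iterate_zero, id] at h0
      rw [h0]; exact dvd_zero _
    · have h1 : linF s t ^ (d + 1 - c) ∣ dirD s t h := by
        apply ih c _ (dirD_hom s t hh)
        rwa [← Function.iterate_succ_apply]
      have h2 : linF s t ^ (d + 1 - (c + 1)) ∣ dirD q (-p) h := by
        apply ih (c + 1) _ (dirD_hom q (-p) hh)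
        rw [dirD_iter_comm, h0, dirD_zero]
      have h3 : linF s t ^ (d + 1 - c) ∣ linF s t * dirD q (-p) h := by
        refine dvd_trans (pow_dvd_pow _ (n := d + 1 - (c + 1) + 1) (by omega)) ?_
        rw [pow_succ']
        exact mul_dvd_mul_left _ h2
      have h4 : linF s t ^ (d + 1 - c) ∣ ((d + 1 : ℕ) : ℂ) • h := by
        rw [euler_split s t p q hpq hh]
        exact dvd_add (dvd_mul_of_dvd_right h1 _) h3
      have h5 : h = C (((d + 1 : ℕ) : ℂ)⁻¹) * (((d + 1 : ℕ) : ℂ) • h) := by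
        rw [← smul_eq_C_mul, smul_smul, inv_mul_cancel₀ (Nat.cast_ne_zero.mpr (by omega)), one_smul]
      rw [show d + 1 + 1 - (c + 1) = d + 1 - c by omega, h5]
      exact dvd_mul_of_dvd_right h4 _

theorem linF_hom (s t : ℂ) : (linF s t).IsHomogeneous 1 :=
  ((isHomogeneous_X ℂ 0).C_mul t).sub ((isHomogeneous_X ℂ 1).C_mul s)

theorem linF_ne (s t p q : ℂ) (hpq : s * p + t * q = 1) : linF s t ≠ 0 := by
  intro h
  have := congrArg (eval ![q, -p]) h
  simp [linF] at this
  have h1 : (1 : ℂ) = 0 := by linear_combination this - hpq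
  exact one_ne_zero h1

theorem dirD_linF_mul (s t : ℂ) (r : MvPolynomial (Fin 2) ℂ) :
    dirD s t (linF s t * r) = linF s t * dirD s t r := by
  unfold dirD linF
  simp only [pderiv_mul, map_sub, pderiv_C_mul, pderiv_X, smul_eq_C_mul]
  simp
  ring

theorem dirD_pow_mul (s t : ℂ) (k : ℕ) (r : MvPolynomial (Fin 2) ℂ) :
    dirD s t (linF s t ^ k * r) = linF s t ^ k * dirD s t r := by
  induction k generalizing r with
  | zero => simp
  | succ k ih => rw [pow_succ, mul_assoc, ih, dirD_linF_mul, mul_assoc]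

theorem dirD_iter_pow_mul (s t : ℂ) (k c : ℕ) (r : MvPolynomial (Fin 2) ℂ) :
    (dirD s t)^[c] (linF s t ^ k * r) = linF s t ^ k * (dirD s t)^[c] r := by
  induction c generalizing r with
  | zero => simp
  | succ c ih => rw [Function.iterate_succ_apply, dirD_pow_mul, ih, Function.iterate_succ_apply]

theorem deg_pow_mul (s t p q : ℂ) (hpq : s * p + t * q = 1) (k d : ℕ)
    (r : MvPolynomial (Fin 2) ℂ) (hr : r ≠ 0) (hh : (linF s t ^ k * r).IsHomogeneous d) :
    k + r.totalDegree = d := by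
  have hL := pow_ne_zero k (linF_ne s t p q hpq)
  rw [← hh.totalDegree (mul_ne_zero hL hr), totalDegree_mul_of_isDomain hL hr,
    ((linF_hom s t).pow k).totalDegree hL, one_mul]

theorem backward (s t p q : ℂ) (hpq : s * p + t * q = 1) (d c : ℕ) (hc : c ≤ d)
    (h : MvPolynomial (Fin 2) ℂ) (hh : h.IsHomogeneous d) (hd : linF s t ^ (d + 1 - c) ∣ h) :
    (dirD s t)^[c] h = 0 := by
  obtain ⟨r, rfl⟩ := hd
  have h1 := dirD_iter_hom s t c hh
  rw [dirD_iter_pow_mul] at h1 ⊢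
  by_contra hne
  have := deg_pow_mul s t p q hpq _ _ _ (right_ne_zero_of_mul hne) h1
  omega

theorem exists_pq (s t : ℂ) (h : ¬(s = 0 ∧ t = 0)) : ∃ p q : ℂ, s * p + t * q = 1 := by
  by_cases hs : s = 0
  · have ht : t ≠ 0 := fun ht => h ⟨hs, ht⟩
    exact ⟨0, t⁻¹, by simp [ht]⟩
  · exact ⟨s⁻¹, 0, by simp [hs]⟩

/-- if the linear form `a₁·x + b₁·y` divides the nonzero degree-`n`
binary form `f` (n ≥ 2) and `g` is the directional derivative of `f` along the
conjugate of `(a₁,b₁)`, then `g ≠ 0` and for every nonzero direction `u` and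
`1 ≤ c ≤ n−1`, `D_u^c g = 0` iff `(u₂·x − u₁·y)^(n−c)` divides `g`. -/
theorem projected_state_directional_derivative (n : ℕ) (hn : 2 ≤ n)
    (f : MvPolynomial (Fin 2) ℂ) (hf : f ≠ 0) (hhom : f.IsHomogeneous n)
    (a₁ b₁ : ℂ) (hab : ¬(a₁ = 0 ∧ b₁ = 0))
    (hdvd : (C a₁ * X (0 : Fin 2) + C b₁ * X (1 : Fin 2)) ∣ f)
    (g : MvPolynomial (Fin 2) ℂ)
    (hg : g = C ((starRingEnd ℂ) a₁) * pderiv (0 : Fin 2) f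
            + C ((starRingEnd ℂ) b₁) * pderiv (1 : Fin 2) f) :
    g ≠ 0 ∧
      ∀ (u : Fin 2 → ℂ), u ≠ 0 → ∀ c : ℕ, 1 ≤ c → c ≤ n - 1 →
        ((fun h : MvPolynomial (Fin 2) ℂ =>
            C (u 0) * pderiv (0 : Fin 2) h + C (u 1) * pderiv (1 : Fin 2) h)^[c] g = 0 ↔
          (C (u 1) * X (0 : Fin 2) - C (u 0) * X (1 : Fin 2)) ^ (n - c) ∣ g) := by
  have hgd : g = dirD ((starRingEnd ℂ) a₁) ((starRingEnd ℂ) b₁) f := hg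
  refine ⟨?_, ?_⟩
  · intro h0
    obtain ⟨p, q, hpq⟩ := exists_pq ((starRingEnd ℂ) a₁) ((starRingEnd ℂ) b₁) (by simpa using hab)
    have h1 := forward _ _ p q hpq n 1 f hhom (by simpa [hgd] using h0)
    obtain ⟨r, hr⟩ := h1
    rw [Nat.add_sub_cancel] at hr
    have hr0 : r ≠ 0 := by
      rintro rfl
      exact hf (by simpa using hr)
    have hdeg := deg_pow_mul _ _ p q hpq n n r hr0 (hr ▸ hhom)
    have hrC := totalDegree_eq_zero_iff_eq_C.mp (show r.totalDegree = 0 by omega)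
    obtain ⟨w, hw⟩ := hdvd
    have he := congrArg (eval ![b₁, -a₁]) (hw.symm.trans hr)
    rw [hrC] at he
    simp only [linF, map_mul, map_add, map_sub, map_pow, eval_C, eval_X] at he
    simp only [Matrix.cons_val_zero, Matrix.cons_val_one] at he
    have hz : a₁ * b₁ + b₁ * -a₁ = 0 := by ring
    rw [hz, zero_mul] at he
    rcases mul_eq_zero.mp he.symm with h2 | h2
    · have h3 := eq_zero_of_pow_eq_zero h2
      have h4 : ((Complex.normSq b₁ + Complex.normSq a₁ : ℝ) : ℂ) = 0 := by
        rw [Complex.ofReal_add, ← Complex.mul_conj, ← Complex.mul_conj]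
        linear_combination h3
      have h5 : Complex.normSq b₁ + Complex.normSq a₁ = 0 := by exact_mod_cast h4
      have ha := Complex.normSq_nonneg a₁
      have hb := Complex.normSq_nonneg b₁
      exact hab ⟨Complex.normSq_eq_zero.mp (by linarith), Complex.normSq_eq_zero.mp (by linarith)⟩
    · rw [h2, C_0] at hrC
      exact hr0 hrC
  · intro u hu c hc1 hc2
    have hgh : g.IsHomogeneous (n - 1) := hgd ▸ dirD_hom _ _ hhom
    obtain ⟨p, q, hpq⟩ := exists_pq (u 0) (u 1) (by
      rintro ⟨h0, h1⟩
      apply hu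
      ext i
      fin_cases i
      · exact h0
      · exact h1)
    change (dirD (u 0) (u 1))^[c] g = 0 ↔ linF (u 0) (u 1) ^ (n - c) ∣ g
    have hn1 : n - c = n - 1 + 1 - c := by omega
    rw [hn1]
    exact ⟨forward _ _ p q hpq (n - 1) c g hgh, backward _ _ p q hpq (n - 1) c hc2 g hgh⟩
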